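/- Lemma 3 (conditional resolvability when the eavesdropper knows Sender 1's codeword): With the random codebook triple (C, C1, C2) generated as in Lemma 1 and the same single-letter joint law, if R2 > I(U2;Y|U,U1,S), then the expectation over the random codebooks of the average, over indices (l, l1), of D( P^n_{YS|U(l),U1(l,l1),C2} || P^n_{YS|U U1}(.|U(l),U1(l,l1)) ) converges to 0 as n tends to infinity. -/

import Mathlib

/-!
By symmetry it suffices to look at one pair of words `(u, u1)` and an i.i.d. codebook of Sender 2
for the corresponding memoryless channel `W` with ideal output law `Q`. In the expected divergence,
split the normalized output weight at each output into the contribution `x` of the word actually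
sent and the contribution `y` of the others, and use `log (x + y) ≤ x ^ ρ / ρ + (y - 1)` for
`0 < ρ ≤ 1`. By independence the mean of `y` is at most `1`, so the divergence of a codebook of size
`m` is at most `(ρ log 2)⁻¹ m ^ (-ρ) E[(W / Q) ^ ρ]`. This moment is multiplicative over the `n`
letters. For a single letter, `E[(W / Q) ^ ρ] 2 ^ (-ρ R2)` is `1` at `ρ = 0`, where its derivative
`(I(U2;Y|U,U1,S) - R2) log 2` is negative; hence it is less than `1` for some small `ρ`, and the
divergence decays exponentially.
-/

open scoped BigOperators

noncomputable section

namespace Paper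

/-- `p` is a probability mass function on the finite type `α`. -/
def IsPmf {α : Type*} [Fintype α] (p : α → ℝ) : Prop :=
  (∀ a, 0 ≤ p a) ∧ ∑ a, p a = 1

/-- `k` is a conditional pmf (a channel / stochastic kernel). -/
def IsKernel {α β : Type*} [Fintype β] (k : α → β → ℝ) : Prop :=
  ∀ a, IsPmf (k a)

/-- Shannon entropy (base 2) of a mass function on a finite type. -/
def ent {α : Type*} [Fintype α] (p : α → ℝ) : ℝ :=
  -∑ a, p a * Real.logb 2 (p a)

/-- Law (pushforward) of the random variable `X` under the mass function `p`. -/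
def law {Ω α : Type*} [Fintype Ω] [DecidableEq α] (p : Ω → ℝ) (X : Ω → α) :
    α → ℝ := fun a => ∑ ω, if X ω = a then p ω else 0

/-- Entropy `H(X)` of a random variable `X`. -/
def H {Ω α : Type*} [Fintype Ω] [Fintype α] [DecidableEq α] (p : Ω → ℝ)
    (X : Ω → α) : ℝ := ent (law p X)

/-- Conditional entropy `H(X|Y)`. -/
def Hc {Ω α β : Type*} [Fintype Ω] [Fintype α] [Fintype β] [DecidableEq α]
    [DecidableEq β] (p : Ω → ℝ) (X : Ω → α) (Y : Ω → β) : ℝ :=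
  H p (fun ω => (X ω, Y ω)) - H p Y

/-- Mutual information `I(X;Y)`. -/
def MI {Ω α β : Type*} [Fintype Ω] [Fintype α] [Fintype β] [DecidableEq α]
    [DecidableEq β] (p : Ω → ℝ) (X : Ω → α) (Y : Ω → β) : ℝ :=
  H p X + H p Y - H p (fun ω => (X ω, Y ω))

/-- Conditional mutual information `I(X;Y|Z)`. -/
def cMI {Ω α β γ : Type*} [Fintype Ω] [Fintype α] [Fintype β] [Fintype γ]
    [DecidableEq α] [DecidableEq β] [DecidableEq γ] (p : Ω → ℝ) (X : Ω → α)
    (Y : Ω → β) (Z : Ω → γ) : ℝ :=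
  Hc p X Z - Hc p X (fun ω => (Y ω, Z ω))

/-- Kullback–Leibler divergence (base 2). -/
def KL {α : Type*} [Fintype α] (p q : α → ℝ) : ℝ :=
  ∑ a, p a * Real.logb 2 (p a / q a)

/-- Binary entropy function. -/
def hb (x : ℝ) : ℝ := -(x * Real.logb 2 x) - (1 - x) * Real.logb 2 (1 - x)

/-- A (message-indexed) encoder is causal: its `j`-th output symbol depends only on the
first `j` state symbols. -/
def Causal {M A B : Type*} {n : ℕ} (e : M → (Fin n → A) → Fin n → B) : Prop :=
  ∀ m s s' j, (∀ i, i ≤ j → s i = s' i) → e m s j = e m s' j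

/-- A strictly causal encoder: its `j`-th output symbol depends only on the state symbols
strictly before `j`. -/
def StrictlyCausal {M A B : Type*} {n : ℕ} (e : M → (Fin n → A) → Fin n → B) : Prop :=
  ∀ m s s' j, (∀ i, i < j → s i = s' i) → e m s j = e m s' j

/-- Sample space carrying the single-letter random variables `(U,U1,U2,S,Y)`. -/
abbrev O5Y (U U1 U2 AS AY : Type) : Type := U × U1 × U2 × AS × AY

namespace O5Y
variable {U U1 U2 AS AY : Type}
def u (ω : O5Y U U1 U2 AS AY) : U := ω.1
def u1 (ω : O5Y U U1 U2 AS AY) : U1 := ω.2.1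
def u2 (ω : O5Y U U1 U2 AS AY) : U2 := ω.2.2.1
def s (ω : O5Y U U1 U2 AS AY) : AS := ω.2.2.2.1
def y (ω : O5Y U U1 U2 AS AY) : AY := ω.2.2.2.2
end O5Y

variable {U U1 U2 AS AY : Type} [Fintype U] [Fintype U1] [Fintype U2] [Fintype AS]
  [Fintype AY] [DecidableEq U] [DecidableEq U1] [DecidableEq U2] [DecidableEq AS]
  [DecidableEq AY]

/-- The single-letter joint law `P_S P_U P_{U1|U} P_{U2|U} P_{Y|UU1U2S}`. -/
def slJointY (PU : U → ℝ) (PU1 : U → U1 → ℝ) (PU2 : U → U2 → ℝ) (PS : AS → ℝ)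
    (PY : U → U1 → U2 → AS → AY → ℝ) : O5Y U U1 U2 AS AY → ℝ :=
  fun ω => PS ω.s * PU ω.u * PU1 ω.u ω.u1 * PU2 ω.u ω.u2 * PY ω.u ω.u1 ω.u2 ω.s ω.y

/-- The probability of drawing the superposition codebook realization `(c, c1, c2)`. -/
def cbProb (PU : U → ℝ) (PU1 : U → U1 → ℝ) (PU2 : U → U2 → ℝ) {m0 m1 m2 n : ℕ}
    (c : Fin m0 → Fin n → U) (c1 : Fin m0 → Fin m1 → Fin n → U1)
    (c2 : Fin m0 → Fin m2 → Fin n → U2) : ℝ :=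
  (∏ l, ∏ i, PU (c l i)) * (∏ l, ∏ l1, ∏ i, PU1 (c l i) (c1 l l1 i)) *
    ∏ l, ∏ l2, ∏ i, PU2 (c l i) (c2 l l2 i)

/-- The distribution `P^n_{YS|U(l),U1(l,l1),C2}` induced by the codebook realization
given the indices `(l, l1)` (uniform index of Sender 2's codeword). -/
def inducedYS (PS : AS → ℝ) (PY : U → U1 → U2 → AS → AY → ℝ) {m0 m1 m2 n : ℕ}
    (c : Fin m0 → Fin n → U) (c1 : Fin m0 → Fin m1 → Fin n → U1)
    (c2 : Fin m0 → Fin m2 → Fin n → U2) (l : Fin m0) (l1 : Fin m1) :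
    (Fin n → AY) × (Fin n → AS) → ℝ :=
  fun ys => ((m2 : ℝ))⁻¹ * ∑ l2,
    ∏ i, PY (c l i) (c1 l l1 i) (c2 l l2 i) (ys.2 i) (ys.1 i) * PS (ys.2 i)

/-- The ideal distribution `P^n_{YS|UU1}(· | u, u1)`. -/
def idealYS (PU2 : U → U2 → ℝ) (PS : AS → ℝ) (PY : U → U1 → U2 → AS → AY → ℝ)
    {n : ℕ} (u : Fin n → U) (u1 : Fin n → U1) : (Fin n → AY) × (Fin n → AS) → ℝ :=
  fun ys => ∑ u2 : Fin n → U2, (∏ i, PU2 (u i) (u2 i)) *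
    ∏ i, PY (u i) (u1 i) (u2 i) (ys.2 i) (ys.1 i) * PS (ys.2 i)

open scoped Topology

/-! ### Means and product mass functions -/

section Mean

variable {α β : Type*} [Fintype α]

/-- The mean `∑ a, p a * f a` of `f` under the mass function `p`; no normalization of `p` is built
in, so that linearity needs no hypothesis. -/
def mean (p f : α → ℝ) : ℝ := ∑ a, p a * f a

lemma mean_const {p : α → ℝ} (hp : ∑ a, p a = 1) (c : ℝ) : mean p (fun _ ↦ c) = c := by
  rw [mean, ← Finset.sum_mul, hp, one_mul]

lemma mean_zero (p : α → ℝ) : mean p (fun _ ↦ 0) = 0 := by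
  simp only [mean, mul_zero, Finset.sum_const_zero]

lemma mean_add (p f g : α → ℝ) : mean p (fun a ↦ f a + g a) = mean p f + mean p g := by
  simp only [mean, mul_add, Finset.sum_add_distrib]

lemma mean_const_mul (p : α → ℝ) (c : ℝ) (f : α → ℝ) :
    mean p (fun a ↦ c * f a) = c * mean p f := by
  simp only [mean, Finset.mul_sum, mul_left_comm]

lemma mean_sum {ι : Type*} (s : Finset ι) (p : α → ℝ) (f : ι → α → ℝ) :
    mean p (fun a ↦ ∑ i ∈ s, f i a) = ∑ i ∈ s, mean p (f i) := by
  simp only [mean, Finset.mul_sum]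
  exact Finset.sum_comm

lemma mean_mono {p f g : α → ℝ} (hp : ∀ a, 0 ≤ p a) (hfg : ∀ a, f a ≤ g a) :
    mean p f ≤ mean p g :=
  Finset.sum_le_sum fun a _ ↦ mul_le_mul_of_nonneg_left (hfg a) (hp a)

lemma mean_nonneg {p f : α → ℝ} (hp : ∀ a, 0 ≤ p a) (hf : ∀ a, 0 ≤ f a) : 0 ≤ mean p f :=
  Finset.sum_nonneg fun a _ ↦ mul_nonneg (hp a) (hf a)

lemma mean_congr {p f g : α → ℝ} (hfg : ∀ a, p a ≠ 0 → f a = g a) : mean p f = mean p g :=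
  Finset.sum_congr rfl fun a _ ↦ by
    by_cases ha : p a = 0
    · rw [ha, zero_mul, zero_mul]
    · rw [hfg a ha]

lemma le_mean {p f : α → ℝ} (hp : ∀ a, 0 ≤ p a) (hf : ∀ a, 0 ≤ f a) (a : α) :
    p a * f a ≤ mean p f :=
  Finset.single_le_sum (f := fun a ↦ p a * f a) (fun a _ ↦ mul_nonneg (hp a) (hf a))
    (Finset.mem_univ a)

lemma mean_comp_equiv [Fintype β] (e : α ≃ β) (p f : β → ℝ) :
    mean (p ∘ e) (f ∘ e) = mean p f :=
  e.sum_comp fun b ↦ p b * f b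

end Mean

section Product

variable {ι X : Type*} [Fintype ι]

/-- The product mass function `∏ i, p i`, the law of a tuple of independent coordinates. -/
def prodPmf (p : ι → X → ℝ) (x : ι → X) : ℝ := ∏ i, p i (x i)

variable [DecidableEq ι] [Fintype X]

lemma sum_prodPmf (p : ι → X → ℝ) : ∑ x, prodPmf p x = ∏ i, ∑ a, p i a :=
  (Fintype.prod_sum p).symm

lemma sum_prodPmf_eq_one {p : ι → X → ℝ} (hp : ∀ i, ∑ a, p i a = 1) : ∑ x, prodPmf p x = 1 := by
  rw [sum_prodPmf, Finset.prod_congr rfl fun i _ ↦ hp i, Finset.prod_const_one]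

lemma isPmf_prodPmf {p : ι → X → ℝ} (hp : ∀ i, IsPmf (p i)) : IsPmf (prodPmf p) :=
  ⟨fun _ ↦ Finset.prod_nonneg fun i _ ↦ (hp i).1 _, sum_prodPmf_eq_one fun i ↦ (hp i).2⟩

lemma mean_prodPmf_prod (p f : ι → X → ℝ) :
    mean (prodPmf p) (fun x ↦ ∏ i, f i (x i)) = ∏ i, mean (p i) (f i) := by
  simp only [mean, prodPmf, ← Finset.prod_mul_distrib, Fintype.prod_sum]

lemma mean_prodPmf_finset_prod {p : ι → X → ℝ} (hp : ∀ i, ∑ a, p i a = 1) (s : Finset ι)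
    (f : ι → X → ℝ) :
    mean (prodPmf p) (fun x ↦ ∏ i ∈ s, f i (x i)) = ∏ i ∈ s, mean (p i) (f i) := by
  have h := mean_prodPmf_prod p fun i a ↦ if i ∈ s then f i a else 1
  have hfactor (i : ι) :
      mean (p i) (fun a ↦ if i ∈ s then f i a else 1) = if i ∈ s then mean (p i) (f i) else 1 := by
    split_ifs
    · rfl
    · exact mean_const (hp i) 1
  simpa only [hfactor, Fintype.prod_ite_mem] using h

lemma mean_prodPmf_apply {p : ι → X → ℝ} (hp : ∀ i, ∑ a, p i a = 1) (j : ι) (f : X → ℝ) :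
    mean (prodPmf p) (fun x ↦ f (x j)) = mean (p j) f := by
  simpa only [Finset.prod_singleton] using mean_prodPmf_finset_prod hp {j} fun _ ↦ f

lemma mean_prodPmf_apply_mul_apply {p : ι → X → ℝ} (hp : ∀ i, ∑ a, p i a = 1) {j k : ι}
    (hjk : j ≠ k) (f g : X → ℝ) :
    mean (prodPmf p) (fun x ↦ f (x j) * g (x k)) = mean (p j) f * mean (p k) g := by
  simpa only [Finset.prod_pair hjk, if_true, if_neg hjk.symm] using
    mean_prodPmf_finset_prod hp {j, k} fun i ↦ if i = j then f else g

end Product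

/-! ### Kullback–Leibler divergence -/

section KL

variable {T T' : Type*} [Fintype T] [Fintype T']

lemma KL_comp_equiv (e : T ≃ T') (p q : T' → ℝ) : KL (p ∘ e) (q ∘ e) = KL p q :=
  mean_comp_equiv e p fun t ↦ Real.logb 2 (p t / q t)

lemma sub_le_mul_log_div {p q : ℝ} (hp : 0 ≤ p) (hq : 0 ≤ q) (hpq : q = 0 → p = 0) :
    p - q ≤ p * Real.log (p / q) := by
  rcases hq.eq_or_lt with rfl | hq
  · simp [hpq rfl]
  · have h := mul_nonneg hq.le (InformationTheory.klFun_nonneg (div_nonneg hp hq.le))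
    have hexpand : q * InformationTheory.klFun (p / q) = p * Real.log (p / q) + q - p := by
      rw [InformationTheory.klFun_apply]
      field_simp
    linarith

lemma KL_nonneg {p q : T → ℝ} (hp : ∀ t, 0 ≤ p t) (hq : ∀ t, 0 ≤ q t)
    (hpq : ∀ t, q t = 0 → p t = 0) (hsum : ∑ t, q t ≤ ∑ t, p t) : 0 ≤ KL p q := by
  have hlog : 0 ≤ ∑ t, p t * Real.log (p t / q t) := calc
    0 ≤ ∑ t, (p t - q t) := by rw [Finset.sum_sub_distrib]; exact sub_nonneg.2 hsum
    _ ≤ _ := Finset.sum_le_sum fun t _ ↦ sub_le_mul_log_div (hp t) (hq t) (hpq t)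
  simp only [KL, Real.logb, ← mul_div_assoc, ← Finset.sum_div]
  exact div_nonneg hlog (Real.log_nonneg one_le_two)

end KL

/-! ### Soft covering by a random codebook -/

section SoftCovering

variable {V T : Type*} [Fintype V]

/-- The output law of the channel `W` when its input has law `p`. -/
def outputLaw (p : V → ℝ) (W : V → T → ℝ) (t : T) : ℝ := mean p fun a ↦ W a t

/-- The output law of the channel `W` when its input is drawn uniformly from the codebook `v`. -/
def codebookLaw {m : ℕ} (W : V → T → ℝ) (v : Fin m → V) (t : T) : ℝ :=
  (m : ℝ)⁻¹ * ∑ k, W (v k) t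

/-- The likelihood ratio of the channel output against its marginal law, with value `0` where the
latter vanishes; its logarithm is the information density. -/
def likelihoodRatio (p : V → ℝ) (W : V → T → ℝ) (a : V) (t : T) : ℝ := W a t / outputLaw p W t

lemma outputLaw_nonneg {p : V → ℝ} (hp : ∀ a, 0 ≤ p a) {W : V → T → ℝ} (hW : ∀ a t, 0 ≤ W a t)
    (t : T) : 0 ≤ outputLaw p W t :=
  mean_nonneg hp fun a ↦ hW a t

lemma likelihoodRatio_nonneg {p : V → ℝ} (hp : ∀ a, 0 ≤ p a) {W : V → T → ℝ}
    (hW : ∀ a t, 0 ≤ W a t) (a : V) (t : T) : 0 ≤ likelihoodRatio p W a t :=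
  div_nonneg (hW a t) (outputLaw_nonneg hp hW t)

variable [Fintype T]

/-- The `ρ`-th moment of the likelihood ratio of input and output of the channel `W`. -/
def ratioMoment (p : V → ℝ) (W : V → T → ℝ) (ρ : ℝ) : ℝ :=
  mean p fun a ↦ mean (W a) fun t ↦ likelihoodRatio p W a t ^ ρ

/-- The expected divergence between the output law of an i.i.d. codebook of `m` words with law `p`
and the output law of the input `p`. -/
def expectedKL (p : V → ℝ) (W : V → T → ℝ) (m : ℕ) : ℝ :=
  mean (prodPmf fun _ : Fin m ↦ p) fun v ↦ KL (codebookLaw W v) (outputLaw p W)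

/-- Codebooks of positive probability only use letters charged by `p`, so their output law is
absolutely continuous with respect to that of `p`. -/
lemma expectedKL_nonneg {p : V → ℝ} (hp : IsPmf p) {W : V → T → ℝ} (hW : IsKernel W) {m : ℕ}
    (hm : 0 < m) : 0 ≤ expectedKL p W m := by
  refine Finset.sum_nonneg fun v _ ↦ ?_
  rcases eq_or_ne (prodPmf (fun _ : Fin m ↦ p) v) 0 with hv | hv
  · rw [hv, zero_mul]
  have hsupport (k : Fin m) : p (v k) ≠ 0 := Finset.prod_ne_zero_iff.1 hv k (Finset.mem_univ k)
  have hm' : (m : ℝ) ≠ 0 := Nat.cast_ne_zero.2 hm.ne'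
  have hWnonneg (a : V) (t : T) : 0 ≤ W a t := (hW a).1 t
  refine mul_nonneg ((isPmf_prodPmf fun _ ↦ hp).1 v) (KL_nonneg (fun t ↦ ?_)
    (outputLaw_nonneg hp.1 hWnonneg) (fun t ht ↦ ?_) (le_of_eq ?_))
  · exact mul_nonneg (by positivity) (Finset.sum_nonneg fun k _ ↦ hWnonneg _ t)
  · have hzero (k : Fin m) : W (v k) t = 0 := by
      have hle := (le_mean hp.1 (fun a ↦ hWnonneg a t) (v k)).trans_eq ht
      have heq := hle.antisymm (mul_nonneg (hp.1 _) (hWnonneg _ t))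
      exact (mul_eq_zero.1 heq).resolve_left (hsupport k)
    simp only [codebookLaw, hzero, Finset.sum_const_zero, mul_zero]
  · calc ∑ t, outputLaw p W t = mean p fun a ↦ ∑ t, W a t := (mean_sum _ _ _).symm
      _ = 1 := by simp only [(hW _).2, mean_const hp.2]
      _ = (m : ℝ)⁻¹ * ∑ k, ∑ t, W (v k) t := by simp [(hW _).2, hm']
      _ = ∑ t, codebookLaw W v t := by
        rw [Finset.sum_comm, Finset.mul_sum]
        rfl

/-- From `log z ≤ (z ^ ρ - 1) / ρ`, subadditivity of `z ↦ z ^ ρ` and Bernoulli's inequality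
`y ^ ρ ≤ 1 + ρ * (y - 1)`. -/
lemma log_add_le {x y ρ : ℝ} (hx : 0 ≤ x) (hy : 0 ≤ y) (hxy : 0 < x + y) (hρ : 0 < ρ)
    (hρ1 : ρ ≤ 1) : Real.log (x + y) ≤ x ^ ρ / ρ + (y - 1) := by
  have hlog : ρ * Real.log (x + y) ≤ (x + y) ^ ρ - 1 := by
    rw [← Real.log_rpow hxy]
    exact Real.log_le_sub_one_of_pos (Real.rpow_pos_of_pos hxy ρ)
  have hadd : (x + y) ^ ρ ≤ x ^ ρ + y ^ ρ := Real.rpow_add_le_add_rpow hx hy hρ.le hρ1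
  have hbernoulli : (1 + (y - 1)) ^ ρ ≤ 1 + ρ * (y - 1) :=
    rpow_one_add_le_one_add_mul_self (by linarith) hρ.le hρ1
  rw [add_sub_cancel] at hbernoulli
  rw [← mul_le_mul_iff_right₀ hρ, mul_add, mul_div_cancel₀ _ hρ.ne']
  linarith

/-- The `m - 1` words other than the `j`-th are independent of it, and contribute at most
`(m - 1) / m` to the expected normalized output weight. -/
lemma mean_mul_sum_erase_sub_one_nonpos {p : V → ℝ} (hp : IsPmf p) {w : V → ℝ}
    (hw : ∀ a, 0 ≤ w a) {m : ℕ} (j : Fin m) :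
    mean (prodPmf fun _ : Fin m ↦ p) (fun v ↦
      w (v j) * ((m * mean p w)⁻¹ * (∑ k ∈ Finset.univ.erase j, w (v k)) - 1)) ≤ 0 := by
  set q := mean p w
  have hq0 : 0 ≤ q := mean_nonneg hp.1 hw
  have hm : 0 < (m : ℝ) := Nat.cast_pos.2 j.pos
  have hsum (_ : Fin m) : ∑ a, p a = 1 := hp.2
  have hcross (k : Fin m) (hk : k ∈ Finset.univ.erase j) :
      mean (prodPmf fun _ : Fin m ↦ p) (fun v ↦ w (v j) * w (v k)) = q * q :=
    mean_prodPmf_apply_mul_apply hsum (Finset.ne_of_mem_erase hk).symm w w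
  calc _ = mean (prodPmf fun _ : Fin m ↦ p) (fun v ↦
          (m * q)⁻¹ * (∑ k ∈ Finset.univ.erase j, w (v j) * w (v k)) + -1 * w (v j)) := by
        congr 1 with v
        rw [← Finset.mul_sum]
        ring
    _ = (m * q)⁻¹ * ((m - 1) * (q * q)) - q := by
        rw [mean_add, mean_const_mul, mean_const_mul, mean_sum, Finset.sum_congr rfl hcross,
          mean_prodPmf_apply hsum, Finset.sum_const, nsmul_eq_mul,
          Finset.card_erase_of_mem (Finset.mem_univ j), Finset.card_univ, Fintype.card_fin,
          Nat.cast_pred j.pos]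
        ring
    _ ≤ 0 := by
        rcases hq0.eq_or_lt with h | h
        · simp [← h]
        · have : (m * q)⁻¹ * ((m - 1) * (q * q)) - q = -(q / m) := by
            field_simp
            ring
          rw [this]
          exact neg_nonpos.2 (by positivity)

omit [Fintype V] in
lemma mul_log_codebook_le {w : V → ℝ} (hw : ∀ a, 0 ≤ w a) {q : ℝ} (hq : 0 < q) {ρ : ℝ}
    (hρ : 0 < ρ) (hρ1 : ρ ≤ 1) {m : ℕ} (v : Fin m → V) (j : Fin m) :
    w (v j) * Real.log ((m : ℝ)⁻¹ * (∑ k, w (v k)) / q) ≤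
      (m : ℝ) ^ (-ρ) / ρ * (w (v j) * (w (v j) / q) ^ ρ) +
        w (v j) * ((m * q)⁻¹ * (∑ k ∈ Finset.univ.erase j, w (v k)) - 1) := by
  rcases (hw (v j)).eq_or_lt with hwj | hwj
  · simp [← hwj]
  have hm : 0 < (m : ℝ) := Nat.cast_pos.2 j.pos
  have hothers : 0 ≤ ∑ k ∈ Finset.univ.erase j, w (v k) := Finset.sum_nonneg fun k _ ↦ hw _
  have hsplit : (m : ℝ)⁻¹ * (∑ k, w (v k)) / q =
      (m : ℝ)⁻¹ * (w (v j) / q) + (m * q)⁻¹ * ∑ k ∈ Finset.univ.erase j, w (v k) := by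
    rw [← Finset.add_sum_erase _ _ (Finset.mem_univ j)]
    field_simp
  have hpow : ((m : ℝ)⁻¹ * (w (v j) / q)) ^ ρ = (m : ℝ) ^ (-ρ) * (w (v j) / q) ^ ρ := by
    rw [Real.mul_rpow (by positivity) (by positivity), Real.inv_rpow hm.le, Real.rpow_neg hm.le]
  have hlog := log_add_le (x := (m : ℝ)⁻¹ * (w (v j) / q))
    (y := (m * q)⁻¹ * ∑ k ∈ Finset.univ.erase j, w (v k)) (by positivity) (by positivity)
    (by positivity) hρ hρ1
  rw [hsplit]
  refine (mul_le_mul_of_nonneg_left hlog hwj.le).trans_eq ?_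
  rw [hpow]
  ring

lemma mean_mul_log_codebook_le {p : V → ℝ} (hp : IsPmf p) {w : V → ℝ} (hw : ∀ a, 0 ≤ w a)
    {ρ : ℝ} (hρ : 0 < ρ) (hρ1 : ρ ≤ 1) {m : ℕ} (j : Fin m) :
    mean (prodPmf fun _ : Fin m ↦ p)
        (fun v ↦ w (v j) * Real.log ((m : ℝ)⁻¹ * (∑ k, w (v k)) / mean p w)) ≤
      (m : ℝ) ^ (-ρ) / ρ * mean p (fun a ↦ w a * (w a / mean p w) ^ ρ) := by
  rcases (mean_nonneg hp.1 hw).eq_or_lt with hq | hq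
  · simp [← hq, Real.zero_rpow hρ.ne', mean_zero]
  calc _ ≤ _ := mean_mono (isPmf_prodPmf fun _ ↦ hp).1 fun v ↦ mul_log_codebook_le hw hq hρ hρ1 v j
    _ ≤ (m : ℝ) ^ (-ρ) / ρ * mean p (fun a ↦ w a * (w a / mean p w) ^ ρ) + 0 := by
        rw [mean_add, mean_const_mul,
          mean_prodPmf_apply (fun _ ↦ hp.2) j fun a ↦ w a * (w a / mean p w) ^ ρ]
        gcongr
        exact mean_mul_sum_erase_sub_one_nonpos hp hw j
    _ = _ := add_zero _

omit [Fintype V] in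
lemma KL_codebookLaw (W : V → T → ℝ) (q : T → ℝ) {m : ℕ} (v : Fin m → V) :
    KL (codebookLaw W v) q = (m * Real.log 2)⁻¹ *
      ∑ t, ∑ j, W (v j) t * Real.log ((m : ℝ)⁻¹ * (∑ k, W (v k) t) / q t) := by
  simp only [KL, Real.logb, codebookLaw, ← Finset.sum_mul, Finset.mul_sum (Finset.univ : Finset T),
    mul_inv]
  exact Finset.sum_congr rfl fun t _ ↦ by ring

lemma ratioMoment_eq_sum (p : V → ℝ) (W : V → T → ℝ) (ρ : ℝ) :
    ratioMoment p W ρ = ∑ t, mean p fun a ↦ W a t * likelihoodRatio p W a t ^ ρ :=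
  mean_sum _ _ _

theorem expectedKL_le {p : V → ℝ} (hp : IsPmf p) {W : V → T → ℝ} (hW : ∀ a t, 0 ≤ W a t) {ρ : ℝ}
    (hρ : 0 < ρ) (hρ1 : ρ ≤ 1) {m : ℕ} (hm : 0 < m) :
    expectedKL p W m ≤ (ρ * Real.log 2)⁻¹ * (m : ℝ) ^ (-ρ) * ratioMoment p W ρ := by
  have hm' : (m : ℝ) ≠ 0 := Nat.cast_ne_zero.2 hm.ne'
  calc expectedKL p W m
      = (m * Real.log 2)⁻¹ * ∑ t, ∑ j : Fin m, mean (prodPmf fun _ : Fin m ↦ p) fun v ↦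
          W (v j) t * Real.log ((m : ℝ)⁻¹ * (∑ k, W (v k) t) / outputLaw p W t) := by
        simp only [expectedKL, KL_codebookLaw, mean_const_mul, mean_sum]
    _ ≤ (m * Real.log 2)⁻¹ * ∑ t, ∑ _j : Fin m, (m : ℝ) ^ (-ρ) / ρ *
          mean p fun a ↦ W a t * likelihoodRatio p W a t ^ ρ := by
        gcongr with t _ j _
        exact mean_mul_log_codebook_le hp (fun a ↦ hW a t) hρ hρ1 j
    _ = _ := by
        rw [ratioMoment_eq_sum]
        simp only [Finset.sum_const, Finset.card_univ, Fintype.card_fin, nsmul_eq_mul,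
          ← Finset.mul_sum]
        field_simp

end SoftCovering

/-! ### Memoryless channels -/

section Memoryless

variable {ι V T : Type*} [Fintype ι]

/-- The product of the channels `W i`, acting independently on the coordinates. -/
def memoryless (W : ι → V → T → ℝ) (v : ι → V) : (ι → T) → ℝ := prodPmf fun i ↦ W i (v i)

variable [DecidableEq ι]

lemma isKernel_memoryless [Fintype T] {W : ι → V → T → ℝ} (hW : ∀ i, IsKernel (W i)) :
    IsKernel (memoryless W) :=
  fun v ↦ isPmf_prodPmf fun i ↦ hW i (v i)

variable [Fintype V]

lemma outputLaw_memoryless (p : ι → V → ℝ) (W : ι → V → T → ℝ) :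
    outputLaw (prodPmf p) (memoryless W) = prodPmf fun i ↦ outputLaw (p i) (W i) :=
  funext fun t ↦ mean_prodPmf_prod p fun i a ↦ W i a (t i)

lemma likelihoodRatio_memoryless (p : ι → V → ℝ) (W : ι → V → T → ℝ) (v : ι → V) (t : ι → T) :
    likelihoodRatio (prodPmf p) (memoryless W) v t =
      ∏ i, likelihoodRatio (p i) (W i) (v i) (t i) := by
  rw [likelihoodRatio, outputLaw_memoryless]
  exact (Finset.prod_div_distrib _ _).symm

lemma ratioMoment_memoryless [Fintype T] {p : ι → V → ℝ} (hp : ∀ i a, 0 ≤ p i a)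
    {W : ι → V → T → ℝ} (hW : ∀ i a t, 0 ≤ W i a t) (ρ : ℝ) :
    ratioMoment (prodPmf p) (memoryless W) ρ = ∏ i, ratioMoment (p i) (W i) ρ := by
  have hpow (v : ι → V) (t : ι → T) : likelihoodRatio (prodPmf p) (memoryless W) v t ^ ρ =
      ∏ i, likelihoodRatio (p i) (W i) (v i) (t i) ^ ρ := by
    rw [likelihoodRatio_memoryless,
      Real.finsetProd_rpow _ _ fun i _ ↦ likelihoodRatio_nonneg (hp i) (hW i) _ _]
  have hinner (v : ι → V) :
      mean (memoryless W v) (fun t ↦ ∏ i, likelihoodRatio (p i) (W i) (v i) (t i) ^ ρ) =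
        ∏ i, mean (W i (v i)) fun t ↦ likelihoodRatio (p i) (W i) (v i) t ^ ρ :=
    mean_prodPmf_prod _ fun i t ↦ likelihoodRatio (p i) (W i) (v i) t ^ ρ
  simp only [ratioMoment, hpow, hinner]
  exact mean_prodPmf_prod p fun i a ↦ mean (W i a) fun t ↦ likelihoodRatio (p i) (W i) a t ^ ρ

end Memoryless

/-! ### The single-letter exponent -/

section Exponent

variable {Ω : Type*} [Fintype Ω]

lemma hasDerivAt_mean_rpow_zero {p r : Ω → ℝ} (hr : ∀ ω, p ω ≠ 0 → 0 < r ω) :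
    HasDerivAt (fun ρ : ℝ ↦ mean p fun ω ↦ r ω ^ ρ) (mean p fun ω ↦ Real.log (r ω)) 0 := by
  refine HasDerivAt.fun_sum fun ω _ ↦ ?_
  rcases eq_or_ne (p ω) 0 with hω | hω
  · simpa only [hω, zero_mul] using hasDerivAt_const (0 : ℝ) (0 : ℝ)
  · simpa only [Real.rpow_zero, one_mul] using
      (Real.hasStrictDerivAt_const_rpow (hr ω hω) 0).hasDerivAt.const_mul (p ω)

/-- At `ρ = 0` both sides equal `1`, and the right one has the larger derivative. -/
lemma exists_mean_rpow_lt_two_rpow {p r : Ω → ℝ} (hp : ∑ ω, p ω = 1)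
    (hr : ∀ ω, p ω ≠ 0 → 0 < r ω) {R : ℝ} (hR : mean p (fun ω ↦ Real.logb 2 (r ω)) < R) :
    ∃ ρ ∈ Set.Ioc (0 : ℝ) 1, mean p (fun ω ↦ r ω ^ ρ) < 2 ^ (ρ * R) := by
  have hlog2 : 0 < Real.log 2 := Real.log_pos one_lt_two
  set gap : ℝ → ℝ := fun ρ ↦ 2 ^ (ρ * R) - mean p fun ω ↦ r ω ^ ρ with hgap
  have hgap_zero : gap 0 = 0 := by
    simp only [hgap, zero_mul, Real.rpow_zero, mean_const hp, sub_self]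
  have hderiv : HasDerivAt gap (Real.log 2 * R - mean p fun ω ↦ Real.log (r ω)) 0 := by
    have hpow : HasDerivAt (fun ρ : ℝ ↦ (2 : ℝ) ^ (ρ * R)) (Real.log 2 * R) 0 := by
      simpa using (hasDerivAt_mul_const R (x := (0 : ℝ))).const_rpow two_pos
    exact hpow.sub (hasDerivAt_mean_rpow_zero hr)
  have hderiv_pos : 0 < Real.log 2 * R - mean p fun ω ↦ Real.log (r ω) := by
    have hlog (ω : Ω) : Real.log (r ω) = Real.log 2 * Real.logb 2 (r ω) :=
      (mul_div_cancel₀ _ hlog2.ne').symm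
    simp only [hlog, mean_const_mul, sub_pos]
    exact mul_lt_mul_of_pos_left hR hlog2
  have hslope : ∀ᶠ ρ in 𝓝[>] (0 : ℝ), 0 < slope gap 0 ρ :=
    (hderiv.tendsto_slope.mono_left (nhdsWithin_mono _ fun _ hρ ↦ ne_of_gt hρ)).eventually_const_lt
      hderiv_pos
  obtain ⟨ρ, hρ_slope, hρ⟩ := (hslope.and (Ioc_mem_nhdsGT zero_lt_one)).exists
  refine ⟨ρ, hρ, sub_pos.1 ?_⟩
  rwa [slope_def_field, hgap_zero, sub_zero, sub_zero, div_pos_iff_of_pos_right hρ.1] at hρ_slope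

end Exponent

section MutualInformation

variable {Ω α β γ : Type*} [Fintype Ω] [DecidableEq α] [DecidableEq β] [DecidableEq γ]

lemma law_apply_pos {p : Ω → ℝ} (hp : ∀ ω, 0 ≤ p ω) (X : Ω → α) {ω : Ω} (hω : p ω ≠ 0) :
    0 < law p X (X ω) := by
  have hterm (ω' : Ω) : 0 ≤ if X ω' = X ω then p ω' else 0 := by
    split_ifs
    exacts [hp ω', le_rfl]
  refine Finset.sum_pos' (fun ω' _ ↦ hterm ω') ⟨ω, Finset.mem_univ ω, ?_⟩
  rw [if_pos rfl]
  exact (hp ω).lt_of_ne' hω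

lemma H_eq_neg_mean [Fintype α] (p : Ω → ℝ) (X : Ω → α) :
    H p X = -mean p fun ω ↦ Real.logb 2 (law p X (X ω)) := by
  rw [H, ent, neg_inj]
  calc ∑ a, law p X a * Real.logb 2 (law p X a)
      = ∑ a, ∑ ω, if X ω = a then p ω * Real.logb 2 (law p X a) else 0 := by
        refine Finset.sum_congr rfl fun a _ ↦ ?_
        conv_lhs => rw [law, Finset.sum_mul]
        simp only [ite_mul, zero_mul, law]
    _ = ∑ ω, p ω * Real.logb 2 (law p X (X ω)) := by
        rw [Finset.sum_comm]
        simp only [Finset.sum_ite_eq, Finset.mem_univ, if_true]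

lemma cMI_eq_mean_logb [Fintype α] [Fintype β] [Fintype γ] {p : Ω → ℝ} (hp : ∀ ω, 0 ≤ p ω)
    (X : Ω → α) (Y : Ω → β) (Z : Ω → γ) :
    cMI p X Y Z = mean p fun ω ↦ Real.logb 2
      (law p (fun ω ↦ (X ω, Y ω, Z ω)) (X ω, Y ω, Z ω) * law p Z (Z ω) /
        (law p (fun ω ↦ (X ω, Z ω)) (X ω, Z ω) * law p (fun ω ↦ (Y ω, Z ω)) (Y ω, Z ω))) := by
  simp only [cMI, Hc, H_eq_neg_mean]
  have hlogb (ω : Ω) (hω : p ω ≠ 0) : Real.logb 2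
      (law p (fun ω ↦ (X ω, Y ω, Z ω)) (X ω, Y ω, Z ω) * law p Z (Z ω) /
        (law p (fun ω ↦ (X ω, Z ω)) (X ω, Z ω) * law p (fun ω ↦ (Y ω, Z ω)) (Y ω, Z ω))) =
      (Real.logb 2 (law p (fun ω ↦ (X ω, Y ω, Z ω)) (X ω, Y ω, Z ω)) +
        Real.logb 2 (law p Z (Z ω))) +
      (-1 * Real.logb 2 (law p (fun ω ↦ (X ω, Z ω)) (X ω, Z ω)) +
        -1 * Real.logb 2 (law p (fun ω ↦ (Y ω, Z ω)) (Y ω, Z ω))) := by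
    have hXYZ := (law_apply_pos hp (fun ω ↦ (X ω, Y ω, Z ω)) hω).ne'
    have hXZ := (law_apply_pos hp (fun ω ↦ (X ω, Z ω)) hω).ne'
    have hYZ := (law_apply_pos hp (fun ω ↦ (Y ω, Z ω)) hω).ne'
    have hZ := (law_apply_pos hp Z hω).ne'
    rw [Real.logb_div (mul_ne_zero hXYZ hZ) (mul_ne_zero hXZ hYZ), Real.logb_mul hXYZ hZ,
      Real.logb_mul hXZ hYZ]
    ring
  rw [mean_congr hlogb, mean_add, mean_add, mean_add, mean_const_mul, mean_const_mul]
  ring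

end MutualInformation

/-! ### Superposition codebooks -/

section Superposition

variable {ι κ₁ κ₂ X X₁ X₂ : Type*} [Fintype ι] [Fintype κ₁] [Fintype κ₂] [DecidableEq ι]
  [DecidableEq κ₁] [DecidableEq κ₂] [Fintype X] [Fintype X₁] [Fintype X₂]

lemma mean_superposition_apply {p : X → ℝ} (hp : ∑ x, p x = 1) {K₁ : X → X₁ → ℝ}
    (hK₁ : ∀ x, ∑ x₁, K₁ x x₁ = 1) {K₂ : X → X₂ → ℝ} (hK₂ : ∀ x, ∑ x₂, K₂ x x₂ = 1)
    (l : ι) (l₁ : κ₁) (G : X → X₁ → (κ₂ → X₂) → ℝ) :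
    (mean (prodPmf fun _ : ι ↦ p) fun c ↦
      mean (prodPmf fun k ↦ prodPmf fun _ : κ₁ ↦ K₁ (c k)) fun c₁ ↦
        mean (prodPmf fun k ↦ prodPmf fun _ : κ₂ ↦ K₂ (c k)) fun c₂ ↦ G (c l) (c₁ l l₁) (c₂ l)) =
      mean p fun x ↦ mean (K₁ x) fun x₁ ↦ mean (prodPmf fun _ : κ₂ ↦ K₂ x) (G x x₁) := by
  have hmean₂ (c : ι → X) (x₁ : X₁) :
      (mean (prodPmf fun k ↦ prodPmf fun _ : κ₂ ↦ K₂ (c k)) fun c₂ ↦ G (c l) x₁ (c₂ l)) =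
        mean (prodPmf fun _ : κ₂ ↦ K₂ (c l)) (G (c l) x₁) :=
    mean_prodPmf_apply (fun k ↦ sum_prodPmf_eq_one fun _ ↦ hK₂ (c k)) l (G (c l) x₁)
  have hmean₁ (c : ι → X) (F : X₁ → ℝ) :
      (mean (prodPmf fun k ↦ prodPmf fun _ : κ₁ ↦ K₁ (c k)) fun c₁ ↦ F (c₁ l l₁)) =
        mean (K₁ (c l)) F := by
    rw [mean_prodPmf_apply (fun k ↦ sum_prodPmf_eq_one fun _ ↦ hK₁ (c k)) l fun v ↦ F (v l₁),
      mean_prodPmf_apply (fun _ ↦ hK₁ (c l))]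
  set g : X → X₁ → ℝ := fun x x₁ ↦ mean (prodPmf fun _ : κ₂ ↦ K₂ x) (G x x₁)
  calc _ = mean (prodPmf fun _ : ι ↦ p) fun c ↦
          mean (prodPmf fun k ↦ prodPmf fun _ : κ₁ ↦ K₁ (c k)) fun c₁ ↦ g (c l) (c₁ l l₁) := by
        simp only [hmean₂, g]
    _ = mean (prodPmf fun _ : ι ↦ p) fun c ↦ mean (K₁ (c l)) (g (c l)) := by
        simp only [fun c ↦ hmean₁ c (g (c l))]
    _ = _ := mean_prodPmf_apply (fun _ ↦ hp) l fun x ↦ mean (K₁ x) (g x)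

end Superposition

section StateChannel

variable {V S Y : Type*}

/-- The channel with output `(y, s)` obtained by driving `PY` with a state of law `PS` that is
independent of the input. -/
def stateChannel (PS : S → ℝ) (PY : V → S → Y → ℝ) (v : V) (ys : Y × S) : ℝ :=
  PY v ys.2 ys.1 * PS ys.2

lemma isKernel_stateChannel [Fintype S] [Fintype Y] {PS : S → ℝ} (hPS : IsPmf PS)
    {PY : V → S → Y → ℝ} (hPY : ∀ v s, IsPmf (PY v s)) : IsKernel (stateChannel PS PY) := by
  refine fun v ↦ ⟨fun ys ↦ mul_nonneg ((hPY _ _).1 _) (hPS.1 _), ?_⟩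
  simp only [stateChannel, Fintype.sum_prod_type_right, ← Finset.sum_mul, (hPY _ _).2, one_mul,
    hPS.2]

end StateChannel

section Codebook

omit [DecidableEq U] [DecidableEq U1] [DecidableEq U2] [DecidableEq AS] [DecidableEq AY]

/-- The single-letter likelihood ratio `P_{YS|U U1 U2} / P_{YS|U U1}`. -/
def singleLetterRatio (PU2 : U → U2 → ℝ) (PS : AS → ℝ) (PY : U → U1 → U2 → AS → AY → ℝ)
    (ω : O5Y U U1 U2 AS AY) : ℝ :=
  likelihoodRatio (PU2 ω.u) (stateChannel PS (PY ω.u ω.u1)) ω.u2 (ω.y, ω.s)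

/-- The expectation, over superposition codebooks with `m0`, `m1`, `m2` words of length `n`, of the
average divergence between the induced and the ideal output law given Sender 1's codeword. -/
def expectedDivergence (PU : U → ℝ) (PU1 : U → U1 → ℝ) (PU2 : U → U2 → ℝ) (PS : AS → ℝ)
    (PY : U → U1 → U2 → AS → AY → ℝ) (m0 m1 m2 n : ℕ) : ℝ :=
  ∑ c : Fin m0 → Fin n → U, ∑ c1 : Fin m0 → Fin m1 → Fin n → U1,
    ∑ c2 : Fin m0 → Fin m2 → Fin n → U2, cbProb PU PU1 PU2 c c1 c2 * ((m0 * m1 : ℝ))⁻¹ *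
      ∑ l, ∑ l1, KL (inducedYS PS PY c c1 c2 l l1) (idealYS PU2 PS PY (c l) (c1 l l1))

variable {PU : U → ℝ} {PU1 : U → U1 → ℝ} {PU2 : U → U2 → ℝ} {PS : AS → ℝ}
  {PY : U → U1 → U2 → AS → AY → ℝ} {m0 m1 m2 n : ℕ}

lemma sum_cbProb_mul (PU : U → ℝ) (PU1 : U → U1 → ℝ) (PU2 : U → U2 → ℝ)
    (F : (Fin m0 → Fin n → U) → (Fin m0 → Fin m1 → Fin n → U1) →
      (Fin m0 → Fin m2 → Fin n → U2) → ℝ) :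
    ∑ c, ∑ c1, ∑ c2, cbProb PU PU1 PU2 c c1 c2 * F c c1 c2 =
      mean (prodPmf fun _ ↦ prodPmf fun _ ↦ PU) fun c ↦
        mean (prodPmf fun l ↦ prodPmf fun _ ↦ prodPmf fun i ↦ PU1 (c l i)) fun c1 ↦
          mean (prodPmf fun l ↦ prodPmf fun _ ↦ prodPmf fun i ↦ PU2 (c l i)) (F c c1) := by
  simp only [cbProb, mean, prodPmf, Finset.mul_sum, mul_assoc]

omit [Fintype U] [Fintype U1] in
lemma KL_inducedYS_idealYS (PU2 : U → U2 → ℝ) (PS : AS → ℝ) (PY : U → U1 → U2 → AS → AY → ℝ)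
    (c : Fin m0 → Fin n → U) (c1 : Fin m0 → Fin m1 → Fin n → U1)
    (c2 : Fin m0 → Fin m2 → Fin n → U2) (l : Fin m0) (l1 : Fin m1) :
    KL (inducedYS PS PY c c1 c2 l l1) (idealYS PU2 PS PY (c l) (c1 l l1)) =
      KL (codebookLaw (memoryless fun i ↦ stateChannel PS (PY (c l i) (c1 l l1 i))) (c2 l))
        (outputLaw (prodPmf fun i ↦ PU2 (c l i))
          (memoryless fun i ↦ stateChannel PS (PY (c l i) (c1 l l1 i)))) := by
  rw [← KL_comp_equiv (Equiv.arrowProdEquivProdArrow (Fin n) (fun _ ↦ AY) fun _ ↦ AS).symm]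
  rfl

lemma expectedDivergence_eq (hPU : IsPmf PU) (hPU1 : IsKernel PU1) (hPU2 : IsKernel PU2)
    (PS : AS → ℝ) (PY : U → U1 → U2 → AS → AY → ℝ) (hm0 : 0 < m0) (hm1 : 0 < m1) :
    expectedDivergence PU PU1 PU2 PS PY m0 m1 m2 n =
      mean (prodPmf fun _ : Fin n ↦ PU) fun u ↦ mean (prodPmf fun i ↦ PU1 (u i)) fun u1 ↦
        expectedKL (prodPmf fun i ↦ PU2 (u i))
          (memoryless fun i ↦ stateChannel PS (PY (u i) (u1 i))) m2 := by
  have hpair (l : Fin m0) (l1 : Fin m1) := mean_superposition_apply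
    (sum_prodPmf_eq_one fun _ : Fin n ↦ hPU.2) (K₁ := fun u ↦ prodPmf fun i ↦ PU1 (u i))
    (fun u ↦ sum_prodPmf_eq_one fun i ↦ (hPU1 (u i)).2)
    (K₂ := fun u ↦ prodPmf fun i ↦ PU2 (u i))
    (fun u ↦ sum_prodPmf_eq_one fun i ↦ (hPU2 (u i)).2) l l1 fun u u1 (v : Fin m2 → Fin n → U2) ↦
      KL (codebookLaw (memoryless fun i ↦ stateChannel PS (PY (u i) (u1 i))) v)
        (outputLaw (prodPmf fun i ↦ PU2 (u i))
          (memoryless fun i ↦ stateChannel PS (PY (u i) (u1 i))))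
  simp only [expectedDivergence, mul_assoc, sum_cbProb_mul, KL_inducedYS_idealYS, mean_const_mul,
    mean_sum, hpair, expectedKL, Finset.sum_const, Finset.card_univ, Fintype.card_fin, nsmul_eq_mul]
  field_simp

lemma expectedDivergence_nonneg (hPU : IsPmf PU) (hPU1 : IsKernel PU1) (hPU2 : IsKernel PU2)
    (hPS : IsPmf PS) (hPY : ∀ u u1 u2 s, IsPmf (PY u u1 u2 s)) (hm0 : 0 < m0) (hm1 : 0 < m1)
    (hm2 : 0 < m2) : 0 ≤ expectedDivergence PU PU1 PU2 PS PY m0 m1 m2 n := by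
  rw [expectedDivergence_eq hPU hPU1 hPU2 PS PY hm0 hm1]
  exact mean_nonneg (isPmf_prodPmf fun _ ↦ hPU).1 fun u ↦
    mean_nonneg (isPmf_prodPmf fun i ↦ hPU1 (u i)).1 fun u1 ↦
      expectedKL_nonneg (isPmf_prodPmf fun i ↦ hPU2 (u i))
        (isKernel_memoryless fun i ↦ isKernel_stateChannel hPS (hPY (u i) (u1 i))) hm2

lemma mean_slJointY (PU : U → ℝ) (PU1 : U → U1 → ℝ) (PU2 : U → U2 → ℝ) (PS : AS → ℝ)
    (PY : U → U1 → U2 → AS → AY → ℝ) (f : O5Y U U1 U2 AS AY → ℝ) :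
    mean (slJointY PU PU1 PU2 PS PY) f = mean PU fun u ↦ mean (PU1 u) fun u1 ↦
      mean (PU2 u) fun u2 ↦ mean (stateChannel PS (PY u u1) u2) fun ys ↦
        f (u, u1, u2, ys.2, ys.1) := by
  simp only [mean, slJointY, stateChannel, O5Y.u, O5Y.u1, O5Y.u2, O5Y.s, O5Y.y, Finset.mul_sum,
    Fintype.sum_prod_type, Fintype.sum_prod_type_right (f := fun _ : AY × AS ↦ _)]
  congr! 5
  ring

lemma isPmf_slJointY (hPU : IsPmf PU) (hPU1 : IsKernel PU1) (hPU2 : IsKernel PU2)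
    (hPS : IsPmf PS) (hPY : ∀ u u1 u2 s, IsPmf (PY u u1 u2 s)) :
    IsPmf (slJointY PU PU1 PU2 PS PY) := by
  constructor
  · exact fun ω ↦ mul_nonneg (mul_nonneg (mul_nonneg (mul_nonneg (hPS.1 _) (hPU.1 _))
      ((hPU1 _).1 _)) ((hPU2 _).1 _)) ((hPY _ _ _ _).1 _)
  · calc ∑ ω, slJointY PU PU1 PU2 PS PY ω = mean (slJointY PU PU1 PU2 PS PY) fun _ ↦ 1 := by
          simp only [mean, mul_one]
      _ = 1 := by
        simp only [mean_slJointY, mean_const (isKernel_stateChannel hPS (hPY _ _) _).2,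
          mean_const (hPU2 _).2, mean_const (hPU1 _).2, mean_const hPU.2]

lemma mean_singleLetterRatio_rpow (PU : U → ℝ) (PU1 : U → U1 → ℝ) (PU2 : U → U2 → ℝ)
    (PS : AS → ℝ) (PY : U → U1 → U2 → AS → AY → ℝ) (ρ : ℝ) :
    mean (slJointY PU PU1 PU2 PS PY) (fun ω ↦ singleLetterRatio PU2 PS PY ω ^ ρ) =
      mean PU fun u ↦ mean (PU1 u) fun u1 ↦ ratioMoment (PU2 u) (stateChannel PS (PY u u1)) ρ :=
  mean_slJointY _ _ _ _ _ _

lemma expectedDivergence_le (hPU : IsPmf PU) (hPU1 : IsKernel PU1) (hPU2 : IsKernel PU2)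
    (hPS : IsPmf PS) (hPY : ∀ u u1 u2 s, IsPmf (PY u u1 u2 s)) {ρ : ℝ} (hρ : 0 < ρ) (hρ1 : ρ ≤ 1)
    (hm0 : 0 < m0) (hm1 : 0 < m1) (hm2 : 0 < m2) :
    expectedDivergence PU PU1 PU2 PS PY m0 m1 m2 n ≤ (ρ * Real.log 2)⁻¹ * (m2 : ℝ) ^ (-ρ) *
      mean (slJointY PU PU1 PU2 PS PY) (fun ω ↦ singleLetterRatio PU2 PS PY ω ^ ρ) ^ n := by
  set C := (ρ * Real.log 2)⁻¹ * (m2 : ℝ) ^ (-ρ)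
  have hW (u : U) (u1 : U1) : IsKernel (stateChannel PS (PY u u1)) :=
    isKernel_stateChannel hPS (hPY u u1)
  have hpair (u : Fin n → U) (u1 : Fin n → U1) :
      expectedKL (prodPmf fun i ↦ PU2 (u i))
          (memoryless fun i ↦ stateChannel PS (PY (u i) (u1 i))) m2 ≤
        C * ∏ i, ratioMoment (PU2 (u i)) (stateChannel PS (PY (u i) (u1 i))) ρ := by
    rw [← ratioMoment_memoryless (fun i ↦ (hPU2 (u i)).1) fun i v ↦ (hW (u i) (u1 i) v).1]
    exact expectedKL_le (isPmf_prodPmf fun i ↦ hPU2 (u i))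
      (fun v ↦ (isKernel_memoryless (fun i ↦ hW (u i) (u1 i)) v).1) hρ hρ1 hm2
  have hword (u : Fin n → U) :
      (mean (prodPmf fun i ↦ PU1 (u i)) fun u1 ↦
          ∏ i, ratioMoment (PU2 (u i)) (stateChannel PS (PY (u i) (u1 i))) ρ) =
        ∏ i, mean (PU1 (u i)) fun u1 ↦ ratioMoment (PU2 (u i)) (stateChannel PS (PY (u i) u1)) ρ :=
    mean_prodPmf_prod _ fun i u1 ↦ ratioMoment (PU2 (u i)) (stateChannel PS (PY (u i) u1)) ρ
  calc expectedDivergence PU PU1 PU2 PS PY m0 m1 m2 n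
      ≤ mean (prodPmf fun _ : Fin n ↦ PU) fun u ↦ mean (prodPmf fun i ↦ PU1 (u i)) fun u1 ↦
          C * ∏ i, ratioMoment (PU2 (u i)) (stateChannel PS (PY (u i) (u1 i))) ρ := by
        rw [expectedDivergence_eq hPU hPU1 hPU2 PS PY hm0 hm1]
        exact mean_mono (isPmf_prodPmf fun _ ↦ hPU).1 fun u ↦
          mean_mono (isPmf_prodPmf fun i ↦ hPU1 (u i)).1 (hpair u)
    _ = C * mean (prodPmf fun _ : Fin n ↦ PU) fun u ↦ ∏ i, mean (PU1 (u i)) fun u1 ↦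
          ratioMoment (PU2 (u i)) (stateChannel PS (PY (u i) u1)) ρ := by
        simp only [mean_const_mul, hword]
    _ = _ := by
        rw [mean_prodPmf_prod _ fun _ u ↦ mean (PU1 u) fun u1 ↦
          ratioMoment (PU2 u) (stateChannel PS (PY u u1)) ρ, mean_singleLetterRatio_rpow,
          Finset.prod_const, Finset.card_univ, Fintype.card_fin]

omit [Fintype U] [Fintype U1] in
lemma singleLetterRatio_pos (hPU2 : IsKernel PU2) (hPS : IsPmf PS)
    (hPY : ∀ u u1 u2 s, IsPmf (PY u u1 u2 s)) {ω : O5Y U U1 U2 AS AY}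
    (hω : slJointY PU PU1 PU2 PS PY ω ≠ 0) : 0 < singleLetterRatio PU2 PS PY ω := by
  obtain ⟨hω, hy⟩ := mul_ne_zero_iff.1 hω
  obtain ⟨hω, hu2⟩ := mul_ne_zero_iff.1 hω
  have hs : PS ω.s ≠ 0 := left_ne_zero_of_mul (left_ne_zero_of_mul hω)
  have hW (u2 : U2) (ys : AY × AS) : 0 ≤ stateChannel PS (PY ω.u ω.u1) u2 ys :=
    (isKernel_stateChannel hPS (hPY _ _) u2).1 ys
  have hWpos : 0 < stateChannel PS (PY ω.u ω.u1) ω.u2 (ω.y, ω.s) :=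
    (hW _ _).lt_of_ne' (mul_ne_zero hy hs)
  exact div_pos hWpos <| (mul_pos (((hPU2 _).1 _).lt_of_ne' hu2) hWpos).trans_le <|
    le_mean (hPU2 ω.u).1 (fun u2 ↦ hW u2 (ω.y, ω.s)) ω.u2

end Codebook

section ConditionalMutualInformation

variable {PU : U → ℝ} {PU1 : U → U1 → ℝ} {PU2 : U → U2 → ℝ} {PS : AS → ℝ}
  {PY : U → U1 → U2 → AS → AY → ℝ}

lemma law_slJointY_u2_y_u_u1_s (PU : U → ℝ) (PU1 : U → U1 → ℝ) (PU2 : U → U2 → ℝ)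
    (PS : AS → ℝ) (PY : U → U1 → U2 → AS → AY → ℝ) (u : U) (u1 : U1) (u2 : U2) (s : AS) (y : AY) :
    law (slJointY PU PU1 PU2 PS PY) (fun ω ↦ (ω.u2, ω.y, ω.u, ω.u1, ω.s)) (u2, y, u, u1, s) =
      slJointY PU PU1 PU2 PS PY (u, u1, u2, s, y) := by
  simp only [law, slJointY, O5Y.u, O5Y.u1, O5Y.u2, O5Y.s, O5Y.y, Fintype.sum_prod_type,
    Prod.mk.injEq, ite_and, Finset.sum_ite_irrel, Finset.sum_const_zero, Finset.sum_ite_eq',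
    Finset.mem_univ, if_true]

omit [DecidableEq AY] in
lemma law_slJointY_u2_u_u1_s (hPY : ∀ u u1 u2 s, IsPmf (PY u u1 u2 s)) (u : U) (u1 : U1)
    (u2 : U2) (s : AS) :
    law (slJointY PU PU1 PU2 PS PY) (fun ω ↦ (ω.u2, ω.u, ω.u1, ω.s)) (u2, u, u1, s) =
      PS s * PU u * PU1 u u1 * PU2 u u2 := by
  simp only [law, slJointY, O5Y.u, O5Y.u1, O5Y.u2, O5Y.s, O5Y.y, Fintype.sum_prod_type,
    Prod.mk.injEq, ite_and, Finset.sum_ite_irrel, Finset.sum_const_zero, Finset.sum_ite_eq',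
    Finset.mem_univ, if_true, ← Finset.mul_sum, (hPY _ _ _ _).2, mul_one]

omit [DecidableEq U2] in
lemma law_slJointY_y_u_u1_s (PU : U → ℝ) (PU1 : U → U1 → ℝ) (PU2 : U → U2 → ℝ)
    (PS : AS → ℝ) (PY : U → U1 → U2 → AS → AY → ℝ) (u : U) (u1 : U1) (s : AS) (y : AY) :
    law (slJointY PU PU1 PU2 PS PY) (fun ω ↦ (ω.y, ω.u, ω.u1, ω.s)) (y, u, u1, s) =
      PS s * PU u * PU1 u u1 * mean (PU2 u) fun u2 ↦ PY u u1 u2 s y := by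
  simp only [law, slJointY, O5Y.u, O5Y.u1, O5Y.u2, O5Y.s, O5Y.y, Fintype.sum_prod_type,
    Prod.mk.injEq, ite_and, Finset.sum_ite_irrel, Finset.sum_const_zero, Finset.sum_ite_eq',
    Finset.mem_univ, if_true, mean, Finset.mul_sum, mul_assoc]

omit [DecidableEq U2] [DecidableEq AY] in
lemma law_slJointY_u_u1_s (hPU2 : IsKernel PU2) (hPY : ∀ u u1 u2 s, IsPmf (PY u u1 u2 s))
    (u : U) (u1 : U1) (s : AS) :
    law (slJointY PU PU1 PU2 PS PY) (fun ω ↦ (ω.u, ω.u1, ω.s)) (u, u1, s) =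
      PS s * PU u * PU1 u u1 := by
  simp only [law, slJointY, O5Y.u, O5Y.u1, O5Y.u2, O5Y.s, O5Y.y, Fintype.sum_prod_type,
    Prod.mk.injEq, ite_and, Finset.sum_ite_irrel, Finset.sum_const_zero, Finset.sum_ite_eq',
    Finset.mem_univ, if_true, ← Finset.mul_sum, (hPY _ _ _ _).2, (hPU2 _).2, mul_one]

lemma cMI_slJointY (hPU : IsPmf PU) (hPU1 : IsKernel PU1) (hPU2 : IsKernel PU2)
    (hPS : IsPmf PS) (hPY : ∀ u u1 u2 s, IsPmf (PY u u1 u2 s)) :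
    cMI (slJointY PU PU1 PU2 PS PY) (fun ω ↦ ω.u2) (fun ω ↦ ω.y) (fun ω ↦ (ω.u, ω.u1, ω.s)) =
      mean (slJointY PU PU1 PU2 PS PY) fun ω ↦ Real.logb 2 (singleLetterRatio PU2 PS PY ω) := by
  rw [cMI_eq_mean_logb (isPmf_slJointY hPU hPU1 hPU2 hPS hPY).1]
  refine mean_congr fun ω hω ↦ congrArg (Real.logb 2) ?_
  have hinput : PS ω.s * PU ω.u * PU1 ω.u ω.u1 * PU2 ω.u ω.u2 ≠ 0 := left_ne_zero_of_mul hω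
  have hus : PS ω.s * PU ω.u * PU1 ω.u ω.u1 ≠ 0 := left_ne_zero_of_mul hinput
  have hs : PS ω.s ≠ 0 := left_ne_zero_of_mul (left_ne_zero_of_mul hus)
  have hout : outputLaw (PU2 ω.u) (stateChannel PS (PY ω.u ω.u1)) (ω.y, ω.s) =
      PS ω.s * mean (PU2 ω.u) fun u2 ↦ PY ω.u ω.u1 u2 ω.s ω.y := by
    simp only [outputLaw, stateChannel, mul_comm _ (PS _), mean_const_mul]
  rw [law_slJointY_u2_y_u_u1_s, law_slJointY_u2_u_u1_s hPY, law_slJointY_y_u_u1_s,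
    law_slJointY_u_u1_s hPU2 hPY, singleLetterRatio, likelihoodRatio, hout, stateChannel,
    mul_comm _ (PS _), mul_div_mul_left _ _ hs]
  refine Eq.trans ?_ (mul_div_mul_left _ _ (mul_ne_zero hinput hus))
  congr 1
  · simp only [slJointY, O5Y.u, O5Y.u1, O5Y.u2, O5Y.s, O5Y.y]
    ring
  · ring

end ConditionalMutualInformation

theorem resolvability_conditional_general (PU : U → ℝ) (PU1 : U → U1 → ℝ) (PU2 : U → U2 → ℝ)
    (PS : AS → ℝ) (PY : U → U1 → U2 → AS → AY → ℝ)
    (hPU : IsPmf PU) (hPU1 : IsKernel PU1) (hPU2 : IsKernel PU2) (hPS : IsPmf PS)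
    (hPY : ∀ u u1 u2 s, IsPmf (PY u u1 u2 s)) (R2 : ℝ)
    (h2 : cMI (slJointY PU PU1 PU2 PS PY) (fun ω ↦ ω.u2) (fun ω ↦ ω.y)
        (fun ω ↦ (ω.u, ω.u1, ω.s)) < R2) :
    ∃ C, ∃ γ ∈ Set.Ico (0 : ℝ) 1, ∀ m0 m1 m2 n : ℕ, 0 < m0 → 0 < m1 →
      (2 : ℝ) ^ ((n : ℝ) * R2) ≤ m2 →
        expectedDivergence PU PU1 PU2 PS PY m0 m1 m2 n ∈ Set.Icc 0 (C * γ ^ n) := by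
  have hjoint := isPmf_slJointY hPU hPU1 hPU2 hPS hPY
  rw [cMI_slJointY hPU hPU1 hPU2 hPS hPY] at h2
  obtain ⟨ρ, ⟨hρ, hρ1⟩, hlt⟩ := exists_mean_rpow_lt_two_rpow hjoint.2
    (fun _ ↦ singleLetterRatio_pos hPU2 hPS hPY) h2
  set M := mean (slJointY PU PU1 PU2 PS PY) fun ω ↦ singleLetterRatio PU2 PS PY ω ^ ρ
  have hpow : (0 : ℝ) < 2 ^ (ρ * R2) := by positivity
  have hM : 0 ≤ M := mean_nonneg hjoint.1 fun ω ↦ Real.rpow_nonneg (likelihoodRatio_nonneg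
    (hPU2 ω.u).1 (fun u2 ↦ (isKernel_stateChannel hPS (hPY ω.u ω.u1) u2).1) _ _) ρ
  refine ⟨(ρ * Real.log 2)⁻¹, M / 2 ^ (ρ * R2), ⟨by positivity, (div_lt_one hpow).2 hlt⟩,
    fun m0 m1 m2 n hm0 hm1 hm2 ↦ ?_⟩
  have hm2pos : 0 < m2 := Nat.cast_pos.1 ((Real.rpow_pos_of_pos two_pos _).trans_le hm2)
  have hm2pow : (m2 : ℝ) ^ (-ρ) ≤ ((2 ^ (ρ * R2)) ^ n)⁻¹ := calc
    (m2 : ℝ) ^ (-ρ) ≤ (2 ^ ((n : ℝ) * R2)) ^ (-ρ) :=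
      Real.rpow_le_rpow_of_nonpos (by positivity) hm2 (neg_nonpos.2 hρ.le)
    _ = ((2 ^ (ρ * R2)) ^ n)⁻¹ := by
      rw [← Real.rpow_mul two_pos.le, ← Real.rpow_mul_natCast two_pos.le,
        ← Real.rpow_neg two_pos.le]
      congr 1
      ring
  refine ⟨expectedDivergence_nonneg hPU hPU1 hPU2 hPS hPY hm0 hm1 hm2pos, ?_⟩
  calc _ ≤ (ρ * Real.log 2)⁻¹ * (m2 : ℝ) ^ (-ρ) * M ^ n :=
        expectedDivergence_le hPU hPU1 hPU2 hPS hPY hρ hρ1 hm0 hm1 hm2pos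
    _ ≤ (ρ * Real.log 2)⁻¹ * ((2 ^ (ρ * R2)) ^ n)⁻¹ * M ^ n := by gcongr
    _ = (ρ * Real.log 2)⁻¹ * (M / 2 ^ (ρ * R2)) ^ n := by
      rw [div_pow]
      ring

/-- **Lemma 3 (conditional resolvability when the eavesdropper knows Sender 1's
codeword).** If `R2 > I(U2;Y|U,U1,S)`, then the expectation over the random codebooks of
the average (over `(l,l1)`) KL divergence between the induced and the ideal conditional
output distributions converges to `0` as `n → ∞`. -/
theorem resolvability_conditional (PU : U → ℝ) (PU1 : U → U1 → ℝ) (PU2 : U → U2 → ℝ)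
    (PS : AS → ℝ) (PY : U → U1 → U2 → AS → AY → ℝ)
    (hPU : IsPmf PU) (hPU1 : IsKernel PU1) (hPU2 : IsKernel PU2) (hPS : IsPmf PS)
    (hPY : ∀ u u1 u2 s, IsPmf (PY u u1 u2 s))
    (R0 R1 R2 : ℝ) (hR0 : 0 < R0) (hR1 : 0 < R1) (hR2 : 0 < R2)
    (h2 : cMI (slJointY PU PU1 PU2 PS PY) (fun ω => ω.u2) (fun ω => ω.y)
        (fun ω => (ω.u, ω.u1, ω.s)) < R2) :
    Filter.Tendsto (fun n : ℕ =>
      ∑ c : Fin ⌈(2 : ℝ) ^ ((n : ℝ) * R0)⌉₊ → Fin n → U,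
      ∑ c1 : Fin ⌈(2 : ℝ) ^ ((n : ℝ) * R0)⌉₊ → Fin ⌈(2 : ℝ) ^ ((n : ℝ) * R1)⌉₊ → Fin n → U1,
      ∑ c2 : Fin ⌈(2 : ℝ) ^ ((n : ℝ) * R0)⌉₊ → Fin ⌈(2 : ℝ) ^ ((n : ℝ) * R2)⌉₊ → Fin n → U2,
        cbProb PU PU1 PU2 c c1 c2 *
          ((⌈(2 : ℝ) ^ ((n : ℝ) * R0)⌉₊ * ⌈(2 : ℝ) ^ ((n : ℝ) * R1)⌉₊ : ℝ))⁻¹ *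
            ∑ l, ∑ l1,
              KL (inducedYS PS PY c c1 c2 l l1) (idealYS PU2 PS PY (c l) (c1 l l1)))
      Filter.atTop (nhds 0) := by
  obtain ⟨C, γ, hγ, hbound⟩ :=
    resolvability_conditional_general PU PU1 PU2 PS PY hPU hPU1 hPU2 hPS hPY R2 h2
  have hmem (n : ℕ) := hbound ⌈(2 : ℝ) ^ ((n : ℝ) * R0)⌉₊ ⌈(2 : ℝ) ^ ((n : ℝ) * R1)⌉₊
    ⌈(2 : ℝ) ^ ((n : ℝ) * R2)⌉₊ n (Nat.ceil_pos.2 (by positivity)) (Nat.ceil_pos.2 (by positivity))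
    (Nat.le_ceil _)
  exact squeeze_zero (fun n ↦ (hmem n).1) (fun n ↦ (hmem n).2)
    (by simpa only [mul_zero] using (tendsto_pow_atTop_nhds_zero_of_lt_one hγ.1 hγ.2).const_mul C)

end Paper
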